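/- arXiv:2302.03542 — 3 statements merged into one kernel-verified Lean document; each statement's English description precedes it below -/
import Mathlib

section
/- Let L, L̂ : ℝ^d → ℝ be differentiable, set h := L − L̂, fix η > 0 and arbitrary vectors w_k, w_{k+1}, w*, g_k ∈ ℝ^d, and define φ_k(w) := ⟨g_k, w⟩ + D_{L̂}(w; w_k) + (1/(2η))‖w − w_k‖². Then the following exact identity holds: L(w_{k+1}) − L(w*) = [(1/(2η))‖w_k − w*‖² − D_h(w*; w_k) − (1/(2η))‖w_{k+1} − w*‖² + D_h(w*; w_{k+1})] + ⟨∇L(w_k) − g_k, w_{k+1} − w*⟩ + ⟨∇φ_k(w_{k+1}), w_{k+1} − w*⟩ + D_h(w_{k+1}; w_k) − (1/(2η))‖w_{k+1} − w_k‖² − D_L(w*; w_{k+1}). -/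
open MeasureTheory
open scoped RealInnerProductSpace BigOperators

/-- Bregman divergence `D_ψ(u; v) = ψ(u) − ψ(v) − ⟨∇ψ(v), u − v⟩`. -/
noncomputable def breg {d : ℕ} (ψ : EuclideanSpace ℝ (Fin d) → ℝ)
    (u v : EuclideanSpace ℝ (Fin d)) : ℝ :=
  ψ u - ψ v - ⟪gradient ψ v, u - v⟫

/-- ProxyProx subproblem objective `φ(w) = ⟨g, w⟩ + D_{L̂}(w; w_k) + ‖w − w_k‖²/(2η)`. -/
noncomputable def phi {d : ℕ} (Lh : EuclideanSpace ℝ (Fin d) → ℝ) (η : ℝ)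
    (wk g w : EuclideanSpace ℝ (Fin d)) : ℝ :=
  ⟪g, w⟫ + breg Lh w wk + (1/(2*η)) * ‖w - wk‖^2

/-- The key deterministic identity (equation (9)) in the analysis of ProxyProx. -/
theorem proxyprox_key_identity {d : ℕ}
    (L Lh : EuclideanSpace ℝ (Fin d) → ℝ)
    (hL : Differentiable ℝ L) (hLh : Differentiable ℝ Lh)
    (η : ℝ) (hη : 0 < η)
    (wk wk1 wstar gk : EuclideanSpace ℝ (Fin d)) :
    L wk1 - L wstar =
      ((1/(2*η)) * ‖wk - wstar‖^2 - breg (fun w => L w - Lh w) wstar wk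
        - (1/(2*η)) * ‖wk1 - wstar‖^2 + breg (fun w => L w - Lh w) wstar wk1)
      + ⟪gradient L wk - gk, wk1 - wstar⟫
      + ⟪gradient (phi Lh η wk gk) wk1, wk1 - wstar⟫
      + breg (fun w => L w - Lh w) wk1 wk
      - (1/(2*η)) * ‖wk1 - wk‖^2
      - breg L wstar wk1 := by
  have hh : ∀ x v, ⟪gradient (fun w => L w - Lh w) x, v⟫
      = ⟪gradient L x, v⟫ - ⟪gradient Lh x, v⟫ := by
    intro x v
    rw [inner_gradient_left, inner_gradient_left, inner_gradient_left,
      fderiv_fun_sub (hL x) (hLh x)]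
    rfl
  have hp : ∀ v, ⟪gradient (phi Lh η wk gk) wk1, v⟫
      = ⟪gk, v⟫ + (⟪gradient Lh wk1, v⟫ - ⟪gradient Lh wk, v⟫)
        + (1/(2*η)) * (2 * ⟪wk1 - wk, v⟫) := by
    intro v
    have h1 : HasFDerivAt (fun w => ⟪gk, w⟫) (innerSL ℝ gk) wk1 :=
      (innerSL ℝ gk).hasFDerivAt
    have h2 : HasFDerivAt (fun w => ⟪gradient Lh wk, w - wk⟫)
        (innerSL ℝ (gradient Lh wk)) wk1 := by
      have := (innerSL ℝ (gradient Lh wk)).hasFDerivAt.comp wk1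
        ((hasFDerivAt_id wk1).sub_const wk)
      exact this
    have h3 := (((hasFDerivAt_id wk1).sub_const wk).norm_sq).const_mul (1/(2*η))
    have h4 := (h1.add (((hLh wk1).hasFDerivAt.sub_const (Lh wk)).sub h2)).add h3
    have h5 : HasFDerivAt (phi Lh η wk gk) _ wk1 := h4
    rw [inner_gradient_left, inner_gradient_left, h5.fderiv]
    simp [inner_sub_left]
  have e1 : wk - wstar = (wk1 - wstar) - (wk1 - wk) := by abel
  have e2 : ‖wk - wstar‖^2 = ‖wk1 - wstar‖^2 - 2 * ⟪wk1 - wk, wk1 - wstar⟫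
      + ‖wk1 - wk‖^2 := by
    rw [e1, norm_sub_sq_real, real_inner_comm]
  simp only [breg, hh, hp, e2]
  simp only [inner_sub_left, inner_sub_right]
  ring
end

section
/- Let x_1, …, x_n ∈ ℝ^d and y_1, …, y_n ∈ {0, 1}, let s(z) := 1/(1 + exp(−z)), and define the logistic regression loss L(w) := −(1/n)Σ_{i=1}^n [y_i · ln s(⟨w, x_i⟩) + (1 − y_i) · ln(1 − s(⟨w, x_i⟩))] and the label-free proxy L̂(w) := −(1/n)Σ_{i=1}^n ln s(⟨w, x_i⟩). Then for all w ∈ ℝ^d, L(w) − L̂(w) = (1/n)Σ_{i=1}^n (1 − y_i)⟨w, x_i⟩. In particular, h := L − L̂ is a linear function of w, so ∇h is constant and hence 0-Lipschitz (i.e., Assumption 1 holds with δ = 0). -/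
open scoped RealInnerProductSpace BigOperators

/-- Section 3.1 of the paper: for binary logistic regression, the label-free proxy obtained
by assigning every point the label 1 differs from the true loss by a linear function of `w`;
in particular `h := L − L̂` has a constant gradient, which is `0`-Lipschitz
(Assumption 1 holds with `δ = 0`). -/
theorem logistic_label_free_proxy {d n : ℕ}
    (x : Fin n → EuclideanSpace ℝ (Fin d)) (y : Fin n → ℝ)
    (hy : ∀ i, y i = 0 ∨ y i = 1)
    (s : ℝ → ℝ) (hs : ∀ z, s z = 1 / (1 + Real.exp (-z)))
    (L Lh : EuclideanSpace ℝ (Fin d) → ℝ)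
    (hL : ∀ w, L w = -(1/(n:ℝ)) * ∑ i, (y i * Real.log (s ⟪w, x i⟫)
      + (1 - y i) * Real.log (1 - s ⟪w, x i⟫)))
    (hLh : ∀ w, Lh w = -(1/(n:ℝ)) * ∑ i, Real.log (s ⟪w, x i⟫)) :
    (∀ w, L w - Lh w = (1/(n:ℝ)) * ∑ i, (1 - y i) * ⟪w, x i⟫) ∧
    LipschitzWith 0 (gradient (fun w => L w - Lh w)) := by
  have key : ∀ z, Real.log (1 - s z) = Real.log (s z) - z := by
    intro z
    have hp : 0 < 1 + Real.exp (-z) := by positivity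
    have h1 : 1 - s z = s z * Real.exp (-z) := by
      rw [hs]
      field_simp
      ring
    have h2 : s z ≠ 0 := by
      rw [hs]
      positivity
    rw [h1, Real.log_mul h2 (Real.exp_ne_zero _), Real.log_exp]
    ring
  have main : ∀ w, L w - Lh w = (1/(n:ℝ)) * ∑ i, (1 - y i) * ⟪w, x i⟫ := by
    intro w
    rw [hL, hLh, ← mul_sub, ← Finset.sum_sub_distrib, neg_mul, ← mul_neg,
      ← Finset.sum_neg_distrib]
    congr 1
    refine Finset.sum_congr rfl fun i _ => ?_
    rw [key]
    ring
  refine ⟨main, ?_⟩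
  have hf : (fun w => L w - Lh w) =
      fun w => innerSL ℝ ((1/(n:ℝ)) • ∑ i, (1 - y i) • x i) w := by
    funext w
    rw [main, innerSL_apply_apply, real_inner_smul_left, sum_inner]
    congr 1
    refine Finset.sum_congr rfl fun i _ => ?_
    rw [real_inner_smul_left, real_inner_comm]
  rw [hf]
  refine LipschitzWith.of_dist_le_mul fun a b => ?_
  simp only [gradient, ContinuousLinearMap.fderiv]
  simp
end

section
/- For all real numbers A, B > 0 and every real X satisfying X ≥ A(1 + 4 ln(e + AB)), it holds that X ≥ A(1 + ln(BX)). -/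
/-- Self-bounding logarithmic inequality from the proof of Corollary 1 of the paper:
for `A, B > 0`, any `X ≥ A(1 + 4 ln(e + AB))` satisfies `X ≥ A(1 + ln(BX))`. -/
theorem self_bounding_log_inequality (A B X : ℝ) (hA : 0 < A) (hB : 0 < B)
    (hX : A * (1 + 4 * Real.log (Real.exp 1 + A * B)) ≤ X) :
    A * (1 + Real.log (B * X)) ≤ X := by
  have hc : 0 < A * B := mul_pos hA hB
  have he := Real.exp_pos 1
  obtain ⟨t, rfl⟩ : ∃ t, X = A * t := ⟨X / A, by field_simp⟩
  have ht := le_of_mul_le_mul_left hX hA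
  apply mul_le_mul_of_nonneg_left _ hA.le
  have h1 : 1 ≤ Real.log (Real.exp 1 + A * B) := by
    rw [Real.le_log_iff_exp_le (by positivity)]
    linarith
  have h2 : Real.log (A * B) ≤ Real.log (Real.exp 1 + A * B) :=
    Real.log_le_log hc (by linarith)
  have htp : 0 < t := by linarith
  have h3 := Real.log_le_sub_one_of_pos (show 0 < t / 2 by linarith)
  rw [Real.log_div htp.ne' (by norm_num)] at h3
  have h4 := Real.log_two_lt_d9
  have h5 : Real.log (B * (A * t)) = Real.log (A * B) + Real.log t := by
    rw [← Real.log_mul hc.ne' htp.ne']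
    congr 1
    ring
  rw [h5]
  linarith
end
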